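/- In any nondegenerate triangle, the distance from the symmedian point X6 to the incenter X1 satisfies dist(X6, X1) ≤ (√2 − 1)·dist(X6, X10), where X10 is the Spieker center. -/

import Mathlib

/-- The point with normalized barycentric coordinates `(x : y : z)`
with respect to the triangle `A B C`. -/
noncomputable def bary (A B C : EuclideanSpace ℝ (Fin 2)) (x y z : ℝ) :
    EuclideanSpace ℝ (Fin 2) :=
  (x + y + z)⁻¹ • (x • A + y • B + z • C)

/-- The triangle center with barycentric coordinates
`(f a b c : f b c a : f c a b)` where `a, b, c` are the side lengths. -/
noncomputable def tcenter (f : ℝ → ℝ → ℝ → ℝ) (A B C : EuclideanSpace ℝ (Fin 2)) :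
    EuclideanSpace ℝ (Fin 2) :=
  bary A B C (f (dist B C) (dist C A) (dist A B))
    (f (dist C A) (dist A B) (dist B C))
    (f (dist A B) (dist B C) (dist C A))

/-!
Write the sides as `a = y + z`, `b = z + x`, `c = x + y` with `x, y, z ≥ 0`, and let `p, q, r` be
the elementary symmetric functions of `x, y, z`. Up to a common positive factor, the squared
distances from `X6` to `X1` and to `X10` are polynomials `I(p, q, r)` and `S(p, q, r)`. For fixed
`p` and `q` the difference `(√2 - 1)² S - I` increases with `r ≥ 0`, so it suffices to treat the
smallest possible `r`. Either it is `0`, where the difference factors, or two of `x, y, z` coincide.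
In the latter case the triangle is isosceles, say with sides `a, a, c`, and all three centers lie on
its axis, so `I` and `S` have a common factor and are otherwise squares; what remains is
`2ca ≤ (√2 - 1)(c² + 2ca + 2a²)`, which is AM-GM for `c²` and `2a²`.
-/

section Barycentric

variable {V : Type*} [NormedAddCommGroup V] [InnerProductSpace ℝ V]

lemma sq_dist_centerMass_centerMass {ι : Type*} (s : Finset ι) (w w' : ι → ℝ) (P : ι → V)
    (hw : ∑ i ∈ s, w i ≠ 0) (hw' : ∑ i ∈ s, w' i ≠ 0) :
    ((∑ i ∈ s, w i) * (∑ i ∈ s, w' i) * dist (s.centerMass w P) (s.centerMass w' P)) ^ 2 =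
      -(∑ i ∈ s, ∑ j ∈ s,
        (w i * (∑ l ∈ s, w' l) - w' i * (∑ l ∈ s, w l)) *
        (w j * (∑ l ∈ s, w' l) - w' j * (∑ l ∈ s, w l)) * dist (P i) (P j) ^ 2) / 2 := by
  set W := ∑ i ∈ s, w i
  set W' := ∑ i ∈ s, w' i
  have sum_eq_zero : ∑ i ∈ s, (w i * W' - w' i * W) = 0 := by
    rw [Finset.sum_sub_distrib, ← Finset.sum_mul, ← Finset.sum_mul, mul_comm W, sub_self]
  have smul_sub_eq : (W * W') • (s.centerMass w P - s.centerMass w' P) =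
      ∑ i ∈ s, (w i * W' - w' i * W) • P i := by
    calc (W * W') • (s.centerMass w P - s.centerMass w' P)
        = W' • (W • s.centerMass w P) - W • (W' • s.centerMass w' P) := by module
      _ = W' • ∑ i ∈ s, w i • P i - W • ∑ i ∈ s, w' i • P i := by
        rw [Finset.centerMass, Finset.centerMass, smul_inv_smul₀ hw, smul_inv_smul₀ hw']
      _ = ∑ i ∈ s, (w i * W' - w' i * W) • P i := by
        rw [Finset.smul_sum, Finset.smul_sum, ← Finset.sum_sub_distrib]
        exact Finset.sum_congr rfl fun i _ => by module
  calc (W * W' * dist (s.centerMass w P) (s.centerMass w' P)) ^ 2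
      = ‖(W * W') • (s.centerMass w P - s.centerMass w' P)‖ ^ 2 := by
        rw [norm_smul, dist_eq_norm, mul_pow, mul_pow ‖W * W'‖, Real.norm_eq_abs, sq_abs]
    _ = _ := by
        rw [smul_sub_eq, ← real_inner_self_eq_norm_sq,
          inner_sum_smul_sum_smul_of_sum_eq_zero P sum_eq_zero P sum_eq_zero]
        simp only [dist_eq_norm, sq]

lemma sq_dist_centerMass_triangle (A B C : V) (w w' : Fin 3 → ℝ) {W W' : ℝ}
    (hW : w 0 + w 1 + w 2 = W) (hW' : w' 0 + w' 1 + w' 2 = W') (hW₀ : W ≠ 0) (hW₀' : W' ≠ 0) :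
    (W * W' * dist (Finset.univ.centerMass w ![A, B, C])
      (Finset.univ.centerMass w' ![A, B, C])) ^ 2 =
      -(dist B C ^ 2 * (w 1 * W' - w' 1 * W) * (w 2 * W' - w' 2 * W) +
        dist C A ^ 2 * (w 2 * W' - w' 2 * W) * (w 0 * W' - w' 0 * W) +
        dist A B ^ 2 * (w 0 * W' - w' 0 * W) * (w 1 * W' - w' 1 * W)) := by
  rw [← Fin.sum_univ_three] at hW hW'
  subst hW hW'
  rw [sq_dist_centerMass_centerMass _ _ _ _ hW₀ hW₀']
  generalize ∑ i, w i = W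
  generalize ∑ i, w' i = W'
  simp only [Fin.sum_univ_three, Matrix.cons_val, dist_self, dist_comm B A, dist_comm C B,
    dist_comm A C]
  ring

end Barycentric

/-- The triangle center with barycentric coordinates `(f a b c : f b c a : f c a b)`, where
`a, b, c` are the side lengths, for a triangle in an arbitrary real normed space. -/
noncomputable def triangleCenter {V : Type*} [NormedAddCommGroup V] [NormedSpace ℝ V]
    (f : ℝ → ℝ → ℝ → ℝ) (A B C : V) : V :=
  Finset.univ.centerMass ![f (dist B C) (dist C A) (dist A B), f (dist C A) (dist A B) (dist B C),
    f (dist A B) (dist B C) (dist C A)] ![A, B, C]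

lemma tcenter_eq_triangleCenter (f : ℝ → ℝ → ℝ → ℝ) (A B C : EuclideanSpace ℝ (Fin 2)) :
    tcenter f A B C = triangleCenter f A B C := by
  simp only [tcenter, bary, triangleCenter, Finset.centerMass, Fin.sum_univ_three, Matrix.cons_val]

section Distances

/-- The squared distance from the symmedian point to the incenter, up to the factor of
`sq_dist_symmedian_incenter`, where `p, q, r` are the elementary symmetric functions of the Ravi
coordinates `x, y, z` (the sides being `y + z`, `z + x`, `x + y`). -/
def symmedianIncenterPoly (p q r : ℝ) : ℝ :=
  p * (p ^ 2 - 4 * q) * q ^ 2 + 2 * q * (p ^ 2 + 2 * q) * r - 3 * p * r ^ 2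

/-- The squared distance from the symmedian point to the Spieker center, in the same coordinates
and up to the same factor as `symmedianIncenterPoly`. -/
def symmedianSpiekerPoly (p q r : ℝ) : ℝ :=
  p ^ 5 * (p ^ 2 - 4 * q) + (11 * p ^ 4 - 6 * p ^ 2 * q + q ^ 2) * r - 3 * p * r ^ 2

lemma exists_ravi_coordinates {X : Type*} [PseudoMetricSpace X] (A B C : X) :
    ∃ x y z : ℝ, 0 ≤ x ∧ 0 ≤ y ∧ 0 ≤ z ∧
      dist B C = y + z ∧ dist C A = z + x ∧ dist A B = x + y := by
  refine ⟨(dist C A + dist A B - dist B C) / 2, (dist A B + dist B C - dist C A) / 2,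
    (dist B C + dist C A - dist A B) / 2, ?_, ?_, ?_, by ring, by ring, by ring⟩
  · linarith [dist_triangle_left B C A, dist_comm A C]
  · linarith [dist_triangle_left C A B, dist_comm B A]
  · linarith [dist_triangle_left A B C, dist_comm C B]

lemma sum_sq_sides_pos {x y z : ℝ} (hpos : 0 < x + y + z) :
    0 < (y + z) ^ 2 + (z + x) ^ 2 + (x + y) ^ 2 := by
  nlinarith only [hpos, sq_nonneg (y - z), sq_nonneg (z - x), sq_nonneg (x - y)]

variable {V : Type*} [NormedAddCommGroup V] [InnerProductSpace ℝ V] {A B C : V} {x y z : ℝ}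

lemma sq_dist_symmedian_incenter (hBC : dist B C = y + z) (hCA : dist C A = z + x)
    (hAB : dist A B = x + y) (hpos : 0 < x + y + z) :
    (x + y + z) * (((y + z) ^ 2 + (z + x) ^ 2 + (x + y) ^ 2) *
        dist (triangleCenter (fun a _ _ => a ^ 2) A B C)
          (triangleCenter (fun a _ _ => a) A B C)) ^ 2 =
      symmedianIncenterPoly (x + y + z) (x * y + y * z + z * x) (x * y * z) := by
  have key := sq_dist_centerMass_triangle A B C ![(y + z) ^ 2, (z + x) ^ 2, (x + y) ^ 2]
    ![y + z, z + x, x + y] rfl (W' := 2 * (x + y + z))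
    (by simp only [Matrix.cons_val]; ring) (sum_sq_sides_pos hpos).ne' (by positivity)
  simp only [triangleCenter, hBC, hCA, hAB, Matrix.cons_val] at key ⊢
  refine mul_left_cancel₀ (mul_pos four_pos hpos).ne' ?_
  rw [symmedianIncenterPoly]
  linear_combination key

lemma sq_dist_symmedian_spieker (hBC : dist B C = y + z) (hCA : dist C A = z + x)
    (hAB : dist A B = x + y) (hpos : 0 < x + y + z) :
    (x + y + z) * (((y + z) ^ 2 + (z + x) ^ 2 + (x + y) ^ 2) *
        dist (triangleCenter (fun a _ _ => a ^ 2) A B C)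
          (triangleCenter (fun _ b c => b + c) A B C)) ^ 2 =
      symmedianSpiekerPoly (x + y + z) (x * y + y * z + z * x) (x * y * z) := by
  have key := sq_dist_centerMass_triangle A B C ![(y + z) ^ 2, (z + x) ^ 2, (x + y) ^ 2]
    ![z + x + (x + y), x + y + (y + z), y + z + (z + x)] rfl (W' := 4 * (x + y + z))
    (by simp only [Matrix.cons_val]; ring) (sum_sq_sides_pos hpos).ne' (by positivity)
  simp only [triangleCenter, hBC, hCA, hAB, Matrix.cons_val] at key ⊢
  refine mul_left_cancel₀ (mul_pos (by norm_num : (0 : ℝ) < 16) hpos).ne' ?_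
  rw [symmedianSpiekerPoly]
  linear_combination key

end Distances

section PolynomialInequality

variable {p q t u v x y z : ℝ}

lemma exists_double_root_le_prod (x y z : ℝ) :
    ∃ u v : ℝ, v ≤ u ∧ x + y + z = 2 * u + v ∧ x * y + y * z + z * x = u ^ 2 + 2 * u * v ∧
      u ^ 2 * v ≤ x * y * z := by
  have disc_nonneg : 0 ≤ (x + y + z) ^ 2 - 3 * (x * y + y * z + z * x) := by
    nlinarith [sq_nonneg (x - y), sq_nonneg (y - z), sq_nonneg (z - x)]
  obtain ⟨d, hd, sq_d⟩ : ∃ d : ℝ, 0 ≤ d ∧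
      d ^ 2 = (x + y + z) ^ 2 - 3 * (x * y + y * z + z * x) :=
    ⟨_, Real.sqrt_nonneg _, Real.sq_sqrt disc_nonneg⟩
  obtain ⟨u, hu⟩ : ∃ u, u = (x + y + z + d) / 3 := ⟨_, rfl⟩
  obtain ⟨v, hv⟩ : ∃ v, v = (x + y + z - 2 * d) / 3 := ⟨_, rfl⟩
  have hvu : v ≤ u := by linarith
  have hsum : x + y + z = 2 * u + v := by rw [hu, hv]; ring
  have hsum_mul : x * y + y * z + z * x = u ^ 2 + 2 * u * v := by
    rw [hu, hv]; linear_combination sq_d / 3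
  -- `(T - x)(T - y)(T - z)` and `(T - u)²(T - v)` differ only in their constant terms.
  have eval_root (s : ℝ) (hs : (s - x) * (s - y) * (s - z) = 0) :
      x * y * z - u ^ 2 * v = (s - u) ^ 2 * (s - v) := by
    linear_combination -hs - s ^ 2 * hsum + s * hsum_mul
  obtain ⟨s, hs, hvs⟩ : ∃ s, (s - x) * (s - y) * (s - z) = 0 ∧ v ≤ s := by
    by_contra! hlt
    linarith [hlt x (by ring), hlt y (by ring), hlt z (by ring)]
  refine ⟨u, v, hvu, hsum, hsum_mul, sub_nonneg.1 ?_⟩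
  rw [eval_root s hs]
  exact mul_nonneg (sq_nonneg _) (sub_nonneg.2 hvs)

lemma symmedianIncenterPoly_double_root (u v : ℝ) :
    symmedianIncenterPoly (2 * u + v) (u ^ 2 + 2 * u * v) (u ^ 2 * v) =
      v * (u - v) ^ 2 * (2 * u * (u + v)) ^ 2 := by
  rw [symmedianIncenterPoly]; ring

lemma symmedianSpiekerPoly_double_root (u v : ℝ) :
    symmedianSpiekerPoly (2 * u + v) (u ^ 2 + 2 * u * v) (u ^ 2 * v) =
      v * (u - v) ^ 2 * (((2 * u) ^ 2 + 2 * (2 * u) * (u + v) + 2 * (u + v) ^ 2) / 2) ^ 2 := by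
  rw [symmedianSpiekerPoly]; ring

lemma sqrt_two_sub_one_nonneg : 0 ≤ √2 - 1 := sub_nonneg.2 (Real.one_le_sqrt.2 one_le_two)

lemma two_mul_mul_le_sqrt_two_sub_one_mul (a c : ℝ) :
    2 * c * a ≤ (√2 - 1) * (c ^ 2 + 2 * c * a + 2 * a ^ 2) := by
  have sq_sqrt_two : √2 ^ 2 = (2 : ℝ) := Real.sq_sqrt zero_le_two
  have : (√2 - 1) * (c ^ 2 + 2 * c * a + 2 * a ^ 2) - 2 * c * a = (√2 - 1) * (c - √2 * a) ^ 2 := by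
    linear_combination (2 * c * a - (√2 - 1) * a ^ 2) * sq_sqrt_two
  rw [← sub_nonneg, this]
  exact mul_nonneg sqrt_two_sub_one_nonneg (sq_nonneg _)

lemma symmedianIncenterPoly_double_root_le (hu : 0 ≤ u) (hv : 0 ≤ v) :
    symmedianIncenterPoly (2 * u + v) (u ^ 2 + 2 * u * v) (u ^ 2 * v) ≤
      (√2 - 1) ^ 2 * symmedianSpiekerPoly (2 * u + v) (u ^ 2 + 2 * u * v) (u ^ 2 * v) := by
  rw [symmedianIncenterPoly_double_root, symmedianSpiekerPoly_double_root, mul_left_comm,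
    ← mul_pow]
  refine mul_le_mul_of_nonneg_left (pow_le_pow_left₀ (by positivity) ?_ 2) (by positivity)
  linarith only [two_mul_mul_le_sqrt_two_sub_one_mul (u + v) (2 * u)]

lemma symmedianIncenterPoly_zero_le_mul (hp : 0 ≤ p) (hq : 0 ≤ q) (hpq : 4 * q ≤ p ^ 2)
    (ht : 1 / 16 ≤ t) :
    symmedianIncenterPoly p q 0 ≤ t * symmedianSpiekerPoly p q 0 := by
  have sq_q_le : q ^ 2 ≤ t * p ^ 4 :=
    calc q ^ 2 ≤ (p ^ 2 / 4) ^ 2 := by gcongr; linarith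
      _ = 1 / 16 * p ^ 4 := by ring
      _ ≤ t * p ^ 4 := by gcongr
  have key := mul_le_mul_of_nonneg_left sq_q_le (mul_nonneg hp (sub_nonneg.2 hpq))
  rw [symmedianIncenterPoly, symmedianSpiekerPoly]
  linarith

lemma monotoneOn_mul_symmedianSpiekerPoly_sub (hp : 0 ≤ p) (hq : 0 ≤ q) (hpq : 3 * q ≤ p ^ 2)
    (ht : 1 / 8 ≤ t) (ht' : t ≤ 1) :
    MonotoneOn (fun r => t * symmedianSpiekerPoly p q r - symmedianIncenterPoly p q r)
      (Set.Ici 0) := by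
  have linear_coeff_nonneg :
      0 ≤ 11 * t * p ^ 4 - (6 * t + 2) * (p ^ 2 * q) - (4 - t) * q ^ 2 := by
    have mul_le : p ^ 2 * q ≤ p ^ 4 / 3 := by nlinarith [sq_nonneg p]
    have sq_le : q ^ 2 ≤ p ^ 4 / 9 := by nlinarith
    calc 0 ≤ (82 * t - 10) / 9 * p ^ 4 := mul_nonneg (by linarith) (by positivity)
      _ = 11 * t * p ^ 4 - (6 * t + 2) * (p ^ 4 / 3) - (4 - t) * (p ^ 4 / 9) := by ring
      _ ≤ _ := by gcongr; linarith
  have quadratic_coeff_nonneg : 0 ≤ 3 * (1 - t) * p :=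
    mul_nonneg (mul_nonneg zero_le_three (sub_nonneg.2 ht')) hp
  intro r (hr : 0 ≤ r) s _ hrs
  have linear_le := mul_le_mul_of_nonneg_left hrs linear_coeff_nonneg
  have quadratic_le := mul_le_mul_of_nonneg_left (pow_le_pow_left₀ hr hrs 2) quadratic_coeff_nonneg
  simp only [symmedianIncenterPoly, symmedianSpiekerPoly]
  linarith

lemma symmedianIncenterPoly_le (hx : 0 ≤ x) (hy : 0 ≤ y) (hz : 0 ≤ z) :
    symmedianIncenterPoly (x + y + z) (x * y + y * z + z * x) (x * y * z) ≤
      (√2 - 1) ^ 2 * symmedianSpiekerPoly (x + y + z) (x * y + y * z + z * x) (x * y * z) := by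
  have sq_sqrt_two : √2 ^ 2 = (2 : ℝ) := Real.sq_sqrt zero_le_two
  have sqrt_two_le : √2 ≤ 23 / 16 := (Real.sqrt_le_left (by norm_num)).2 (by norm_num)
  have one_div_eight_le : 1 / 8 ≤ (√2 - 1) ^ 2 := by linarith
  have le_one : (√2 - 1) ^ 2 ≤ 1 := by linarith [sqrt_two_sub_one_nonneg]
  have hp : 0 ≤ x + y + z := by positivity
  have hq : 0 ≤ x * y + y * z + z * x := by positivity
  have hr : 0 ≤ x * y * z := by positivity
  obtain ⟨u, v, hvu, hsum, hsum_mul, hprod⟩ := exists_double_root_le_prod x y z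
  rw [hsum] at hp ⊢
  rw [hsum_mul] at hq ⊢
  have hu : 0 ≤ u := by linarith
  have mono := monotoneOn_mul_symmedianSpiekerPoly_sub hp hq
    (by nlinarith [sq_nonneg (u - v)]) one_div_eight_le le_one
  rw [← sub_nonneg]
  rcases le_total 0 v with hv | hv
  · have min_nonneg : 0 ≤ u ^ 2 * v := by positivity
    exact (sub_nonneg.2 (symmedianIncenterPoly_double_root_le hu hv)).trans
      (mono min_nonneg hr hprod)
  · have four_mul_le : 4 * (u ^ 2 + 2 * u * v) ≤ (2 * u + v) ^ 2 := by
      nlinarith [mul_nonneg hu (neg_nonneg.2 hv)]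
    exact (sub_nonneg.2 (symmedianIncenterPoly_zero_le_mul hp hq four_mul_le (by linarith))).trans
      (mono Set.self_mem_Ici hr hr)

end PolynomialInequality

theorem stmt_17_general {V : Type*} [NormedAddCommGroup V] [InnerProductSpace ℝ V] (A B C : V)
    (h : A ≠ B ∨ B ≠ C) :
    dist (triangleCenter (fun a _ _ => a ^ 2) A B C) (triangleCenter (fun a _ _ => a) A B C) ≤
      (√2 - 1) * dist (triangleCenter (fun a _ _ => a ^ 2) A B C)
        (triangleCenter (fun _ b c => b + c) A B C) := by
  obtain ⟨x, y, z, hx, hy, hz, hBC, hCA, hAB⟩ := exists_ravi_coordinates A B C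
  have hpos : 0 < x + y + z := by
    rcases h with h | h <;> linarith [dist_pos.2 h]
  have := sqrt_two_sub_one_nonneg
  have key := symmedianIncenterPoly_le hx hy hz
  rw [← sq_dist_symmedian_incenter hBC hCA hAB hpos, ← sq_dist_symmedian_spieker hBC hCA hAB hpos,
    mul_left_comm, ← mul_pow, mul_le_mul_iff_right₀ hpos, mul_left_comm,
    pow_le_pow_iff_left₀ (by positivity) (by positivity) two_ne_zero,
    mul_le_mul_iff_right₀ (sum_sq_sides_pos hpos)] at key
  exact key

theorem stmt_17 (A B C : EuclideanSpace ℝ (Fin 2))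
    (h : AffineIndependent ℝ ![A, B, C]) :
    dist (tcenter (fun a b c => a^2) A B C) (tcenter (fun a b c => a) A B C) ≤ (Real.sqrt 2 - 1) * dist (tcenter (fun a b c => a^2) A B C) (tcenter (fun a b c => b + c) A B C) := by
  simp only [tcenter_eq_triangleCenter]
  exact stmt_17_general A B C (.inl (h.injective.ne (by decide : (0 : Fin 3) ≠ 1)))
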